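/- arXiv:1901.10789 — 6 statements merged into one kernel-verified Lean document; each statement's English description precedes it below -/
import Mathlib

section
/- There exists a universal constant c₄ > 0 such that the following holds: for all positive integers k, n, every vector w ∈ ℝⁿ, and every integer t ≥ 4, if A is a random k×n matrix whose entries are independent and uniformly distributed on {−1,+1}, then the probability that ‖Aw‖₁ > c₄·k·F(w,t) is at most e^{−t²k/4}. -/
open Finset
open scoped Classical

/-- `F(w,t)` computed with respect to a permutation `σ` ordering the coordinates of `w`
by decreasing absolute value. -/
noncomputable def Fval {n : ℕ} (w : Fin n → ℝ) (σ : Equiv.Perm (Fin n)) (t : ℝ) : ℝ :=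
  (∑ j ∈ Finset.univ.filter (fun j : Fin n => (j : ℕ) < ⌊t ^ 2⌋₊), |w (σ j)|) +
    t * Real.sqrt (∑ j ∈ Finset.univ.filter (fun j : Fin n => ⌊t ^ 2⌋₊ ≤ (j : ℕ)), (w (σ j)) ^ 2)

/-!
Split `w` into a set of head coordinates and the complementary tail. The head contributes at most
its `ℓ₁` norm to each row of `A w`, whatever the signs. On the tail, each row is a Rademacher sum,
and `cosh x ≤ exp (x² / 2)` bounds `E exp (r |row|)` by `2 exp (r² s² / 2)`, where `s` is the
Euclidean norm of the tail. The rows are independent, so Chernoff's bound with `r = t / s` shows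
that their `ℓ₁` sum exceeds `k t s` with probability at most `(2 exp (-t² / 2)) ^ k`, and
`2 exp (-t² / 2) ≤ exp (-t² / 4)` as soon as `t ≥ 2`. Hence `c₄ = 1` suffices, and the head may be
any set of coordinates, not only the largest ones.
-/

open scoped BigOperators

lemma expect_prod_eval {ι K : Type*} {α : ι → Type*} [Fintype ι] [DecidableEq ι]
    [∀ i, Fintype (α i)] [∀ i, Nonempty (α i)] [Semifield K] [CharZero K]
    (S : Finset ι) (f : ∀ i, α i → K) :
    𝔼 x : ∀ i, α i, ∏ i ∈ S, f i (x i) = ∏ i ∈ S, 𝔼 y, f i y := by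
  have expect_prod_univ (g : ∀ i, α i → K) :
      𝔼 x : ∀ i, α i, ∏ i, g i (x i) = ∏ i, 𝔼 y, g i y := by
    simp only [Fintype.expect_eq_sum_div_card, Finset.prod_div_distrib, Fintype.prod_sum,
      Fintype.card_pi, Nat.cast_prod]
  calc 𝔼 x : ∀ i, α i, ∏ i ∈ S, f i (x i)
      = 𝔼 x : ∀ i, α i, ∏ i, if i ∈ S then f i (x i) else 1 := by simp
    _ = ∏ i, 𝔼 y, if i ∈ S then f i y else 1 :=
        expect_prod_univ fun i y => if i ∈ S then f i y else 1
    _ = ∏ i, if i ∈ S then 𝔼 y, f i y else 1 := by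
        refine Finset.prod_congr rfl fun i _ => ?_
        split_ifs
        · rfl
        · exact Fintype.expect_one
    _ = ∏ i ∈ S, 𝔼 y, f i y := by simp

lemma card_filter_lt_div_card_le_exp_mul_expect {α : Type*} [Fintype α] (f : α → ℝ) (c : ℝ)
    {r : ℝ} (hr : 0 ≤ r) :
    (#{x | c < f x} : ℝ) / Fintype.card α ≤ Real.exp (-(r * c)) * 𝔼 x, Real.exp (r * f x) := by
  have markov : #{x | c < f x} * Real.exp (r * c) ≤ ∑ x, Real.exp (r * f x) := by
    rw [← nsmul_eq_mul]
    refine (Finset.card_nsmul_le_sum _ _ _ fun x hx => ?_).trans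
      (Finset.sum_le_univ_sum_of_nonneg fun x => (Real.exp_pos (r * f x)).le)
    have hcx : c < f x := (Finset.mem_filter.mp hx).2
    gcongr
  rw [Fintype.expect_eq_sum_div_card, ← mul_div_assoc, Real.exp_neg, ← div_eq_inv_mul]
  gcongr
  exact (le_div_iff₀ (Real.exp_pos _)).mpr markov

lemma two_mul_exp_neg_sq_div_two_le {t : ℝ} (ht : 2 ≤ t) :
    2 * Real.exp (-t ^ 2 / 2) ≤ Real.exp (-t ^ 2 / 4) :=
  calc 2 * Real.exp (-t ^ 2 / 2) ≤ Real.exp 1 * Real.exp (-t ^ 2 / 2) := by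
        gcongr
        linarith [Real.add_one_le_exp 1]
    _ = Real.exp (1 + -t ^ 2 / 2) := (Real.exp_add _ _).symm
    _ ≤ Real.exp (-t ^ 2 / 4) := Real.exp_le_exp.mpr (by nlinarith)

/-- The two-point space of signs `±1`, realized inside `ℝ` so that a random sign is a uniformly
distributed element of `UnitSign`. -/
abbrev UnitSign : Type := ({-1, 1} : Finset ℝ)

lemma UnitSign.abs_coe (e : UnitSign) : |(e : ℝ)| = 1 := by
  obtain ⟨x, hx⟩ := e
  rcases Finset.mem_insert.mp hx with rfl | hx
  · simp
  · simp [Finset.mem_singleton.mp hx]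

instance UnitSign.instNonempty : Nonempty UnitSign := ⟨⟨1, by simp⟩⟩

lemma UnitSign.expect_exp_mul (x : ℝ) : 𝔼 e : UnitSign, Real.exp (e * x) = Real.cosh x := by
  have card_signs : Fintype.card UnitSign = 2 := by
    rw [Fintype.card_coe, Finset.card_pair (by norm_num)]
  rw [Fintype.expect_eq_sum_div_card, card_signs,
    Finset.sum_coe_sort ({-1, 1} : Finset ℝ) fun e => Real.exp (e * x),
    Finset.sum_pair (by norm_num), Real.cosh_eq, neg_one_mul, one_mul, add_comm, Nat.cast_ofNat]

section RademacherSum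

variable {κ ι : Type*} [Fintype κ] [Fintype ι] [DecidableEq ι]

lemma l1_rademacher_sum_le_head_add_tail (w : ι → ℝ) (S : Finset ι) (A : κ → ι → UnitSign) :
    ∑ h, |∑ j, A h j * w j| ≤
      Fintype.card κ * ∑ j ∈ S, |w j| + ∑ h, |∑ j ∈ Sᶜ, A h j * w j| := by
  have row (h : κ) : |∑ j, A h j * w j| ≤ ∑ j ∈ S, |w j| + |∑ j ∈ Sᶜ, A h j * w j| := by
    rw [← Finset.sum_add_sum_compl S]
    refine (abs_add_le _ _).trans (add_le_add_left ?_ _)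
    refine (Finset.abs_sum_le_sum_abs _ _).trans_eq (Finset.sum_congr rfl fun j _ => ?_)
    rw [abs_mul, UnitSign.abs_coe, one_mul]
  refine (Finset.sum_le_sum fun h _ => row h).trans_eq ?_
  rw [Finset.sum_add_distrib, Finset.sum_const, Finset.card_univ, nsmul_eq_mul]

lemma expect_exp_rademacher_sum_le (u : ι → ℝ) (S : Finset ι) :
    𝔼 a : ι → UnitSign, Real.exp (∑ j ∈ S, a j * u j) ≤ Real.exp ((∑ j ∈ S, u j ^ 2) / 2) :=
  calc 𝔼 a : ι → UnitSign, Real.exp (∑ j ∈ S, a j * u j)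
      = ∏ j ∈ S, Real.cosh (u j) := by
        simp only [Real.exp_sum, ← UnitSign.expect_exp_mul]
        exact expect_prod_eval S fun j (e : UnitSign) => Real.exp (e * u j)
    _ ≤ ∏ j ∈ S, Real.exp (u j ^ 2 / 2) :=
        Finset.prod_le_prod (fun j _ => (Real.cosh_pos (u j)).le)
          fun j _ => Real.cosh_le_exp_half_sq (u j)
    _ = Real.exp ((∑ j ∈ S, u j ^ 2) / 2) := by rw [← Real.exp_sum, Finset.sum_div]

lemma expect_exp_abs_rademacher_sum_le (u : ι → ℝ) (S : Finset ι) :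
    𝔼 a : ι → UnitSign, Real.exp |∑ j ∈ S, a j * u j| ≤ 2 * Real.exp ((∑ j ∈ S, u j ^ 2) / 2) := by
  have moment_pos := expect_exp_rademacher_sum_le u S
  have moment_neg := expect_exp_rademacher_sum_le (-u) S
  simp only [Pi.neg_apply, mul_neg, Finset.sum_neg_distrib, neg_sq] at moment_neg
  calc 𝔼 a : ι → UnitSign, Real.exp |∑ j ∈ S, a j * u j|
      ≤ 𝔼 a : ι → UnitSign,
          (Real.exp (∑ j ∈ S, a j * u j) + Real.exp (-∑ j ∈ S, a j * u j)) :=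
        Finset.expect_le_expect fun a _ => Real.exp_abs_le _
    _ ≤ 2 * Real.exp ((∑ j ∈ S, u j ^ 2) / 2) := by
        rw [Finset.expect_add_distrib]
        linarith

variable [DecidableEq κ]

lemma expect_exp_l1_rademacher_sum_le (u : ι → ℝ) (S : Finset ι) :
    𝔼 A : κ → ι → UnitSign, Real.exp (∑ h, |∑ j ∈ S, A h j * u j|) ≤
      (2 * Real.exp ((∑ j ∈ S, u j ^ 2) / 2)) ^ Fintype.card κ :=
  calc 𝔼 A : κ → ι → UnitSign, Real.exp (∑ h, |∑ j ∈ S, A h j * u j|)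
      = (𝔼 a : ι → UnitSign, Real.exp |∑ j ∈ S, a j * u j|) ^ Fintype.card κ := by
        simp only [Real.exp_sum]
        rw [expect_prod_eval univ fun (_ : κ) (a : ι → UnitSign) => Real.exp |∑ j ∈ S, a j * u j|,
          Finset.prod_const, Finset.card_univ]
    _ ≤ (2 * Real.exp ((∑ j ∈ S, u j ^ 2) / 2)) ^ Fintype.card κ := by
        gcongr
        exact expect_exp_abs_rademacher_sum_le u S

lemma l1_rademacher_sum_chernoff (v : ι → ℝ) (S : Finset ι) (c : ℝ) {r : ℝ} (hr : 0 ≤ r) :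
    (#{A : κ → ι → UnitSign | c < ∑ h, |∑ j ∈ S, A h j * v j|} : ℝ) /
        Fintype.card (κ → ι → UnitSign) ≤
      Real.exp (-(r * c)) *
        (2 * Real.exp (r ^ 2 * (∑ j ∈ S, v j ^ 2) / 2)) ^ Fintype.card κ := by
  have moment := expect_exp_l1_rademacher_sum_le (κ := κ) (fun j => r * v j) S
  simp only [mul_left_comm _ r, mul_pow r, ← Finset.mul_sum, abs_mul r, abs_of_nonneg hr] at moment
  refine (card_filter_lt_div_card_le_exp_mul_expect _ c hr).trans ?_
  gcongr

lemma l1_rademacher_sum_tail_l2 (v : ι → ℝ) (S : Finset ι) {t : ℝ} (ht : 0 ≤ t) :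
    (#{A : κ → ι → UnitSign |
        Fintype.card κ * (t * √(∑ j ∈ S, v j ^ 2)) < ∑ h, |∑ j ∈ S, A h j * v j|} : ℝ) /
        Fintype.card (κ → ι → UnitSign) ≤
      (2 * Real.exp (-t ^ 2 / 2)) ^ Fintype.card κ := by
  have sq_nonneg_sum : 0 ≤ ∑ j ∈ S, v j ^ 2 := Finset.sum_nonneg fun j _ => sq_nonneg (v j)
  rcases sq_nonneg_sum.eq_or_lt' with sum_zero | sum_pos
  · have v_zero : ∀ j ∈ S, v j = 0 := by
      simpa [Finset.sum_eq_zero_iff_of_nonneg fun j _ => sq_nonneg (v j)] using sum_zero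
    have rows_zero (A : κ → ι → UnitSign) : ∑ h, |∑ j ∈ S, A h j * v j| = 0 :=
      Finset.sum_eq_zero fun h _ => by
        rw [Finset.sum_eq_zero fun j hj => by rw [v_zero j hj, mul_zero], abs_zero]
    simp only [sum_zero, rows_zero, Real.sqrt_zero, mul_zero, lt_irrefl, Finset.filter_false,
      Finset.card_empty, Nat.cast_zero, zero_div]
    positivity
  · set s := √(∑ j ∈ S, v j ^ 2)
    have s_pos : 0 < s := Real.sqrt_pos.mpr sum_pos
    have s_sq : ∑ j ∈ S, v j ^ 2 = s ^ 2 := (Real.sq_sqrt sq_nonneg_sum).symm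
    -- `r = t / s` minimizes the exponent `r² s² / 2 - r t s`.
    refine (l1_rademacher_sum_chernoff v S _ (div_nonneg ht s_pos.le)).trans_eq ?_
    have chernoff_exponent : -(t / s * (Fintype.card κ * (t * s))) = Fintype.card κ * -t ^ 2 := by
      field_simp
    have mgf_exponent : (t / s) ^ 2 * s ^ 2 / 2 = t ^ 2 / 2 := by field_simp
    rw [s_sq, chernoff_exponent, mgf_exponent, Real.exp_nat_mul, ← mul_pow, mul_left_comm,
      ← Real.exp_add]
    ring_nf

theorem l1_tail_bound_general (w : ι → ℝ) (S : Finset ι) {t : ℝ} (ht : 2 ≤ t) :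
    (#{A : κ → ι → UnitSign |
        Fintype.card κ * (∑ j ∈ S, |w j| + t * √(∑ j ∈ Sᶜ, w j ^ 2)) <
          ∑ h, |∑ j, A h j * w j|} : ℝ) / Fintype.card (κ → ι → UnitSign) ≤
      Real.exp (-(t ^ 2 * Fintype.card κ) / 4) :=
  calc _ ≤ (#{A : κ → ι → UnitSign |
        Fintype.card κ * (t * √(∑ j ∈ Sᶜ, w j ^ 2)) < ∑ h, |∑ j ∈ Sᶜ, A h j * w j|} : ℝ) /
          Fintype.card (κ → ι → UnitSign) := by
        refine div_le_div_of_nonneg_right (Nat.cast_le.mpr (Finset.card_le_card ?_))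
          (Nat.cast_nonneg _)
        refine Finset.monotone_filter_right _ fun A _ large => ?_
        linarith [l1_rademacher_sum_le_head_add_tail w S A]
    _ ≤ (2 * Real.exp (-t ^ 2 / 2)) ^ Fintype.card κ :=
        l1_rademacher_sum_tail_l2 w Sᶜ (zero_le_two.trans ht)
    _ ≤ Real.exp (-t ^ 2 / 4) ^ Fintype.card κ := by
        gcongr
        exact two_mul_exp_neg_sq_div_two_le ht
    _ = Real.exp (-(t ^ 2 * Fintype.card κ) / 4) := by
        rw [← Real.exp_nat_mul]
        ring_nf

end RademacherSum

/-- The coordinates that `σ` lists in the first `⌊t²⌋` places. When `σ` orders `w` by decreasing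
absolute value, these carry the `ℓ₁` part of `F(w, t)`. -/
noncomputable def headCoords {n : ℕ} (σ : Equiv.Perm (Fin n)) (t : ℝ) : Finset (Fin n) :=
  {j | (σ.symm j : ℕ) < ⌊t ^ 2⌋₊}

lemma Fval_eq_sum_headCoords {n : ℕ} (w : Fin n → ℝ) (σ : Equiv.Perm (Fin n)) (t : ℝ) :
    Fval w σ t =
      ∑ j ∈ headCoords σ t, |w j| + t * √(∑ j ∈ (headCoords σ t)ᶜ, w j ^ 2) := by
  have head : ∑ j ∈ {j : Fin n | (j : ℕ) < ⌊t ^ 2⌋₊}, |w (σ j)| =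
      ∑ j ∈ headCoords σ t, |w j| :=
    Finset.sum_equiv σ (by simp [headCoords]) fun _ _ => rfl
  have tail : ∑ j ∈ {j : Fin n | ⌊t ^ 2⌋₊ ≤ (j : ℕ)}, w (σ j) ^ 2 =
      ∑ j ∈ (headCoords σ t)ᶜ, w j ^ 2 :=
    Finset.sum_equiv σ (by simp [headCoords]) fun _ _ => rfl
  rw [Fval, head, tail]

/-- For a random `k×n` matrix `A` with independent uniform `{-1,+1}` entries and any
integer `t ≥ 4`, `Pr[‖Aw‖₁ > c₄ k F(w,t)] ≤ e^{-t²k/4}`. -/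
theorem l1_tail_bound :
    ∃ c₄ : ℝ, 0 < c₄ ∧
      ∀ (k n : ℕ), 0 < k → 0 < n →
        ∀ (w : Fin n → ℝ) (t : ℕ), 4 ≤ t →
          ∀ σ : Equiv.Perm (Fin n), (∀ j l : Fin n, j ≤ l → |w (σ l)| ≤ |w (σ j)|) →
            ((Finset.univ.filter (fun A : Fin k → Fin n → ({-1, 1} : Finset ℝ) =>
                c₄ * (k : ℝ) * Fval w σ (t : ℝ) < ∑ h, |∑ j, (A h j : ℝ) * w j|)).card : ℝ) /
              ((Finset.univ : Finset (Fin k → Fin n → ({-1, 1} : Finset ℝ))).card : ℝ) ≤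
            Real.exp (-((t : ℝ) ^ 2 * (k : ℝ)) / 4) := by
  refine ⟨1, one_pos, fun k n _ _ w t ht σ _ => ?_⟩
  simpa [Fval_eq_sum_headCoords] using l1_tail_bound_general (κ := Fin k) w (headCoords σ t)
    (t := t) (by norm_cast; omega)
end

section
/- There exists a universal constant c₁ > 0 such that for every positive integer n, every vector w ∈ ℝⁿ, and every real t > 0, if x is uniformly distributed on {−1,+1}ⁿ, then the probability that ⟨w, x⟩ > c₁·F(w,t) is at most e^{−t²/2}. -/
open Finset
open scoped Classical

/-!
Split the coordinates into those that `Fval` measures in `ℓ¹` and those that it measures in `ℓ²`.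
The former contribute at most their `ℓ¹` norm to `⟨w, x⟩`, whatever the signs, so the event
`Fval w σ t < ⟨w, x⟩` forces the latter to contribute more than `t` times their `ℓ²` norm, which
Hoeffding's inequality makes as unlikely as claimed.
-/

open MeasureTheory ProbabilityTheory

section SubGaussian

variable {Ω ι : Type*} [MeasurableSpace Ω] {μ : Measure Ω} {X : ι → Ω → ℝ}

theorem measureReal_mul_sqrt_lt_le_exp {Y : Ω → ℝ} {c : NNReal}
    (hY : HasSubgaussianMGF Y c μ) {t : ℝ} (ht : 0 ≤ t) :
    μ.real {ω | t * √c < Y ω} ≤ Real.exp (-(t ^ 2) / 2) := by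
  have : IsFiniteMeasure μ :=
    (integrable_const_iff_isFiniteMeasure one_ne_zero).1 (by simpa using hY.integrable_exp_mul 0)
  obtain rfl | hc := eq_or_ne c 0
  · -- The Chernoff bound is void here: with `x / 0 = 0`, `measure_ge_le` only bounds by `1`.
    have h_null : μ {ω | t * √(0 : NNReal) < Y ω} = 0 := by
      rw [measure_eq_zero_iff_ae_notMem]
      filter_upwards [hY.ae_eq_zero_of_hasSubgaussianMGF_zero] with ω hω
      simp [hω]
    rw [Measure.real, h_null, ENNReal.toReal_zero]
    exact (Real.exp_pos _).le
  · calc μ.real {ω | t * √c < Y ω}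
        ≤ μ.real {ω | t * √c ≤ Y ω} :=
          measureReal_mono (Set.ofPred_subset_ofPred.2 fun _ ↦ le_of_lt)
      _ ≤ Real.exp (-(t * √c) ^ 2 / (2 * c)) := hY.measure_ge_le (by positivity)
      _ = Real.exp (-(t ^ 2) / 2) := by
          rw [mul_pow, Real.sq_sqrt c.coe_nonneg]
          field_simp

theorem hasSubgaussianMGF_sum_mul (h_indep : iIndepFun X μ) {s : Finset ι}
    {c : ι → NNReal} (h_subG : ∀ i ∈ s, HasSubgaussianMGF (X i) (c i) μ) (w : ι → ℝ) :
    HasSubgaussianMGF (fun ω ↦ ∑ i ∈ s, w i * X i ω) (∑ i ∈ s, ‖w i‖₊ ^ 2 * c i) μ := by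
  refine HasSubgaussianMGF.sum_of_iIndepFun
    (h_indep.comp (fun i x ↦ w i * x) fun i ↦ by fun_prop) fun i hi ↦ ?_
  have h_sq : ‖w i‖₊ ^ 2 = ⟨w i ^ 2, sq_nonneg (w i)⟩ := Subtype.ext (by simp)
  rw [h_sq]
  exact (h_subG i hi).const_mul (w i)

theorem measureReal_sum_abs_add_mul_sqrt_sum_sq_lt_sum_le_exp [Fintype ι] [DecidableEq ι]
    (h_indep : iIndepFun X μ) {s : Finset ι} (h_abs : ∀ i ∈ s, ∀ᵐ ω ∂μ, |X i ω| ≤ 1)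
    (h_subG : ∀ i ∈ sᶜ, HasSubgaussianMGF (X i) 1 μ) (w : ι → ℝ) {t : ℝ} (ht : 0 ≤ t) :
    μ.real {ω | ∑ i ∈ s, |w i| + t * √(∑ i ∈ sᶜ, w i ^ 2) < ∑ i, w i * X i ω} ≤
      Real.exp (-(t ^ 2) / 2) := by
  have : IsProbabilityMeasure μ := h_indep.isProbabilityMeasure
  have h_tail := measureReal_mul_sqrt_lt_le_exp (hasSubgaussianMGF_sum_mul h_indep h_subG w) ht
  simp only [mul_one, NNReal.coe_sum, NNReal.coe_pow, coe_nnnorm, Real.norm_eq_abs, sq_abs]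
    at h_tail
  refine (ENNReal.toReal_mono (measure_ne_top _ _) (measure_mono_ae ?_)).trans h_tail
  filter_upwards [(ae_ball_iff s.countable_toSet).2 h_abs] with ω h_abs hω
  have h_head : ∑ i ∈ s, w i * X i ω ≤ ∑ i ∈ s, |w i| := sum_le_sum fun i hi ↦
    calc w i * X i ω ≤ |w i| * |X i ω| := (le_abs_self _).trans_eq (abs_mul _ _)
      _ ≤ |w i| := mul_le_of_le_one_right (abs_nonneg _) (h_abs i hi)
  have h_split := sum_add_sum_compl s fun i ↦ w i * X i ω
  change _ < _ at hω ⊢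
  linarith

end SubGaussian

section Uniform

variable {Ω ι : Type*} [MeasurableSpace Ω] [MeasurableSingletonClass Ω]

theorem uniformOn_univ_real_setOf [Fintype Ω] (p : Ω → Prop) [DecidablePred p] :
    (uniformOn (Set.univ : Set Ω)).real {x | p x} = (#{x | p x} : ℝ) / #(univ : Finset Ω) := by
  have h_coe : {x | p x} = (({x | p x} : Finset Ω) : Set Ω) := by simp
  rw [h_coe, Measure.real, uniformOn_univ, Measure.count_apply_finset]
  simp

theorem integral_uniformOn_univ [Fintype Ω] (f : Ω → ℝ) :
    ∫ ω, f ω ∂(uniformOn Set.univ) = (∑ ω, f ω) / Fintype.card Ω := by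
  rw [integral_fintype .of_finite, sum_div]
  refine sum_congr rfl fun ω _ ↦ ?_
  rw [Measure.real, uniformOn_univ, Measure.count_singleton]
  simp [div_eq_inv_mul]

theorem uniformOn_univ_eq_pi [Finite Ω] [Fintype ι] :
    uniformOn (Set.univ : Set (ι → Ω)) = Measure.pi fun _ ↦ uniformOn Set.univ := by
  rw [← uniformOn_pi, Set.pi_univ]

theorem iIndepFun_eval_uniformOn_univ [Finite Ω] [Nonempty Ω] [Finite ι] {f : Ω → ℝ}
    (hf : Measurable f) : iIndepFun (fun i (x : ι → Ω) ↦ f (x i)) (uniformOn Set.univ) := by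
  have := Fintype.ofFinite ι
  rw [uniformOn_univ_eq_pi]
  exact iIndepFun_pi fun _ ↦ hf.aemeasurable

theorem hasSubgaussianMGF_eval_uniformOn_univ [Finite Ω] [Nonempty Ω] [Finite ι] {f : Ω → ℝ}
    {c : NNReal} (hf : HasSubgaussianMGF f c (uniformOn Set.univ)) (i : ι) :
    HasSubgaussianMGF (fun x : ι → Ω ↦ f (x i)) c (uniformOn Set.univ) := by
  have := Fintype.ofFinite ι
  rw [uniformOn_univ_eq_pi]
  refine HasSubgaussianMGF.of_map (measurable_pi_apply i).aemeasurable ?_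
  rwa [(measurePreserving_eval _ i).map_eq]

end Uniform

section Rademacher

instance nonempty_sign : Nonempty ({-1, 1} : Finset ℝ) := ⟨1, by simp⟩

theorem abs_coe_sign (x : ({-1, 1} : Finset ℝ)) : |(x : ℝ)| = 1 := by
  have hx : (x : ℝ) = -1 ∨ (x : ℝ) = 1 := by simpa only [mem_insert, mem_singleton] using x.2
  obtain hx | hx := hx <;> simp [hx]

theorem integral_sign_uniformOn_univ :
    ∫ x : ({-1, 1} : Finset ℝ), (x : ℝ) ∂(uniformOn Set.univ) = 0 := by
  rw [integral_uniformOn_univ, sum_coe_sort _ fun x : ℝ ↦ x, sum_pair (by norm_num)]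
  norm_num

theorem hasSubgaussianMGF_sign_uniformOn_univ :
    HasSubgaussianMGF (fun x : ({-1, 1} : Finset ℝ) ↦ (x : ℝ)) 1 (uniformOn Set.univ) := by
  have h_mem (x : ({-1, 1} : Finset ℝ)) : (x : ℝ) ∈ Set.Icc (-1) 1 :=
    abs_le.1 (abs_coe_sign x).le
  convert hasSubgaussianMGF_of_mem_Icc_of_integral_eq_zero
    measurable_subtype_coe.aemeasurable (ae_of_all _ h_mem) integral_sign_uniformOn_univ
  norm_num

theorem rademacher_upper_tail_general {ι : Type*} [Fintype ι] [DecidableEq ι] (w : ι → ℝ)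
    (s : Finset ι) {t : ℝ} (ht : 0 ≤ t) :
    (#{x : ι → ({-1, 1} : Finset ℝ) |
        ∑ i ∈ s, |w i| + t * √(∑ i ∈ sᶜ, w i ^ 2) < ∑ i, w i * (x i : ℝ)} : ℝ) /
      #(univ : Finset (ι → ({-1, 1} : Finset ℝ))) ≤ Real.exp (-(t ^ 2) / 2) := by
  rw [← uniformOn_univ_real_setOf]
  exact measureReal_sum_abs_add_mul_sqrt_sum_sq_lt_sum_le_exp
    (iIndepFun_eval_uniformOn_univ measurable_subtype_coe)
    (fun i _ ↦ ae_of_all _ fun x ↦ (abs_coe_sign (x i)).le)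
    (fun i _ ↦ hasSubgaussianMGF_eval_uniformOn_univ hasSubgaussianMGF_sign_uniformOn_univ i) w ht

end Rademacher

/-- The indices of the first `⌊t²⌋` coordinates in the order `σ`, those that `Fval` measures
in `ℓ¹`. Positions are counted from `0`, as in `Fval`. -/
noncomputable def leadingIndices {n : ℕ} (σ : Equiv.Perm (Fin n)) (t : ℝ) : Finset (Fin n) :=
  {i | (σ.symm i : ℕ) < ⌊t ^ 2⌋₊}

theorem Fval_eq_sum_leadingIndices {n : ℕ} (w : Fin n → ℝ) (σ : Equiv.Perm (Fin n)) (t : ℝ) :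
    Fval w σ t = ∑ i ∈ leadingIndices σ t, |w i| +
      t * √(∑ i ∈ (leadingIndices σ t)ᶜ, w i ^ 2) := by
  have h_head : ∑ j with ((j : Fin n) : ℕ) < ⌊t ^ 2⌋₊, |w (σ j)| =
      ∑ i ∈ leadingIndices σ t, |w i| :=
    sum_equiv σ (by simp [leadingIndices]) fun _ _ ↦ rfl
  have h_tail : ∑ j with ⌊t ^ 2⌋₊ ≤ ((j : Fin n) : ℕ), w (σ j) ^ 2 =
      ∑ i ∈ (leadingIndices σ t)ᶜ, w i ^ 2 :=
    sum_equiv σ (by simp [leadingIndices]) fun _ _ ↦ rfl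
  rw [Fval, h_head, h_tail]

/-- Rademacher upper tail bound: for `x` uniform on `{-1,+1}ⁿ`,
`Pr[⟨w,x⟩ > c₁ F(w,t)] ≤ e^{-t²/2}`. -/
theorem rademacher_upper_tail :
    ∃ c₁ : ℝ, 0 < c₁ ∧
      ∀ (n : ℕ) (w : Fin n → ℝ) (t : ℝ), 0 < t →
        ∀ σ : Equiv.Perm (Fin n), (∀ j k : Fin n, j ≤ k → |w (σ k)| ≤ |w (σ j)|) →
          ((Finset.univ.filter (fun x : Fin n → ({-1, 1} : Finset ℝ) =>
              c₁ * Fval w σ t < ∑ i, w i * (x i : ℝ))).card : ℝ) /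
            ((Finset.univ : Finset (Fin n → ({-1, 1} : Finset ℝ))).card : ℝ) ≤
          Real.exp (-(t ^ 2) / 2) := by
  refine ⟨1, one_pos, fun n w t ht σ _ ↦ ?_⟩
  simpa only [one_mul, Fval_eq_sum_leadingIndices] using
    rademacher_upper_tail_general w (leadingIndices σ t) ht.le
end

section
/- For every constant c₃ > 0 there exist constants b₁ > 1, c > 0 and an integer n₀ such that for all n ≥ n₀ and all integers T with 1 ≤ T ≤ n/b₁, it holds that ⌊√( c₃^{−1} · ln( n / (12·c₃·ln binom(n,T)) ) )⌋ ≥ c·√(ln(n/T)). -/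
open Finset
open scoped Classical

/-!
Write `x = n / T`. The bound `binom(n,T) ≤ (e x) ^ T` gives `ln binom(n,T) ≤ T (1 + ln x)`, so the
argument of the logarithm in `τ(T)` is at least `x / (12 c₃ (1 + ln x))`. For `x` large in terms of
`c₃` the denominator is at most `√x`, hence that logarithm is at least `(ln x) / 2`. The number
under the floor is then at least `√(ln x / (2 c₃)) ≥ 1`, and rounding down costs at most a
factor `2`.
-/

theorem choose_le_div_pow_mul_exp (n k : ℕ) :
    (n.choose k : ℝ) ≤ ((n : ℝ) / k) ^ k * Real.exp k := by
  rcases k.eq_zero_or_pos with rfl | hk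
  · simp
  calc (n.choose k : ℝ) ≤ (n : ℝ) ^ k / k.factorial := Nat.choose_le_pow_div k n
    _ = ((n : ℝ) / k) ^ k * ((k : ℝ) ^ k / k.factorial) := by
      rw [div_pow]
      field_simp
    _ ≤ ((n : ℝ) / k) ^ k * Real.exp k := by
      gcongr
      exact Real.pow_div_factorial_le_exp k k.cast_nonneg k

theorem log_choose_le {n k : ℕ} (hkn : k ≤ n) :
    Real.log (n.choose k) ≤ k * (1 + Real.log ((n : ℝ) / k)) := by
  rcases k.eq_zero_or_pos with rfl | hk
  · simp
  have hn : 0 < n := hk.trans_le hkn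
  have hchoose : (0 : ℝ) < n.choose k := by exact_mod_cast Nat.choose_pos hkn
  calc Real.log (n.choose k) ≤ Real.log (((n : ℝ) / k) ^ k * Real.exp k) :=
        Real.log_le_log hchoose (choose_le_div_pow_mul_exp n k)
    _ = k * (1 + Real.log ((n : ℝ) / k)) := by
        rw [Real.log_mul (by positivity) (by positivity), Real.log_pow, Real.log_exp]
        ring

theorem log_choose_pos {n k : ℕ} (hk : 0 < k) (hkn : k < n) : 0 < Real.log (n.choose k) := by
  have hne_one : n.choose k ≠ 1 := by
    rw [Ne, Nat.choose_eq_one_iff]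
    omega
  have hpos : 0 < n.choose k := Nat.choose_pos hkn.le
  exact Real.log_pos (by exact_mod_cast (by omega : 1 < n.choose k))

theorem mul_one_add_le_exp_half {a y : ℝ} (hy : 0 ≤ y) (hay : 8 * a ≤ y) :
    a * (1 + y) ≤ Real.exp (y / 2) :=
  calc a * (1 + y) ≤ y / 8 * (1 + y) := by gcongr; linarith
    _ ≤ 1 + y / 2 + (y / 2) ^ 2 / 2 := by linarith
    _ ≤ Real.exp (y / 2) := Real.quadratic_le_exp_of_nonneg (by positivity)

theorem half_log_le_log_div {a x : ℝ} (ha : 0 < a) (hx : Real.exp (8 * a) ≤ x) :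
    Real.log x / 2 ≤ Real.log (x / (a * (1 + Real.log x))) := by
  have hx0 : 0 < x := (Real.exp_pos _).trans_le hx
  have hax : 8 * a ≤ Real.log x := (Real.le_log_iff_exp_le hx0).2 hx
  have hlog : 0 < Real.log x := by linarith
  have hden : Real.log (a * (1 + Real.log x)) ≤ Real.log x / 2 :=
    (Real.log_le_iff_le_exp (by positivity)).2 (mul_one_add_le_exp_half hlog.le hax)
  rw [Real.log_div hx0.ne' (by positivity)]
  linarith

theorem half_log_div_le_log_div_log_choose {a : ℝ} {n k : ℕ} (ha : 0 < a)
    (hnk : Real.exp (8 * a) ≤ (n : ℝ) / k) :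
    Real.log ((n : ℝ) / k) / 2 ≤ Real.log ((n : ℝ) / (a * Real.log (n.choose k))) := by
  have hone : 1 < (n : ℝ) / k := (Real.one_lt_exp_iff.2 (by positivity)).trans_le hnk
  have hk : 0 < k := by
    refine Nat.pos_of_ne_zero fun hk0 => ?_
    norm_num [hk0] at hone
  have hkn : k < n := by
    rw [one_lt_div (by positivity)] at hone
    exact_mod_cast hone
  have hn : 0 < n := hk.trans hkn
  have hlog_choose : 0 < Real.log (n.choose k) := log_choose_pos hk hkn
  have hlog : 0 < Real.log ((n : ℝ) / k) := Real.log_pos hone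
  calc Real.log ((n : ℝ) / k) / 2
      ≤ Real.log ((n : ℝ) / k / (a * (1 + Real.log ((n : ℝ) / k)))) :=
        half_log_le_log_div ha hnk
    _ = Real.log (n / (a * (k * (1 + Real.log ((n : ℝ) / k))))) := by
        rw [div_div, mul_left_comm]
    _ ≤ Real.log ((n : ℝ) / (a * Real.log (n.choose k))) := by
        gcongr
        exact log_choose_le hkn.le

/-- The truncation parameter `τ(T)` of the lower-bound argument, as a function of `c₃`, `n` and `T`.
The floor is taken in `ℕ`, which agrees with the integer floor because a square root is
nonnegative. -/
noncomputable def truncationParameter (c₃ : ℝ) (n T : ℕ) : ℕ :=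
  ⌊Real.sqrt (c₃⁻¹ * Real.log ((n : ℝ) / (12 * c₃ * Real.log (n.choose T))))⌋₊

theorem tau_lower_bound_general {c₃ : ℝ} {n T : ℕ} (hc₃ : 0 < c₃)
    (hnT : Real.exp (96 * c₃) ≤ (n : ℝ) / T) :
    (2 * √(2 * c₃))⁻¹ * √(Real.log ((n : ℝ) / T)) ≤ truncationParameter c₃ n T := by
  set x : ℝ := (n : ℝ) / T
  set y : ℝ := √(c₃⁻¹ * Real.log ((n : ℝ) / (12 * c₃ * Real.log (n.choose T))))
  have hx : 96 * c₃ ≤ Real.log x :=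
    (Real.le_log_iff_exp_le ((Real.exp_pos _).trans_le hnT)).2 hnT
  have hlog : Real.log x / 2 ≤ Real.log ((n : ℝ) / (12 * c₃ * Real.log (n.choose T))) :=
    half_log_div_le_log_div_log_choose (by positivity) (by convert hnT using 2; ring)
  have hxy : √(Real.log x / (2 * c₃)) ≤ y := by
    refine Real.sqrt_le_sqrt ?_
    calc Real.log x / (2 * c₃) = c₃⁻¹ * (Real.log x / 2) := by field_simp
      _ ≤ _ := by gcongr
  have hone : 1 ≤ y := by
    refine le_trans (Real.one_le_sqrt.2 ?_) hxy
    rw [one_le_div (by positivity)]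
    linarith
  calc (2 * √(2 * c₃))⁻¹ * √(Real.log x) = √(Real.log x / (2 * c₃)) / 2 := by
        rw [Real.sqrt_div' _ (by positivity)]
        field_simp
    _ ≤ y / 2 := by gcongr
    _ ≤ truncationParameter c₃ n T := (Nat.div_two_lt_floor hone).le

/-- The truncation parameter `τ(T) = ⌊√(c₃⁻¹ ln(n/(12 c₃ ln binom(n,T))))⌋` is of order
at least `√(ln(n/T))` whenever `T ≤ n/b₁` for `b₁` large enough. -/
theorem tau_lower_bound :
    ∀ c₃ : ℝ, 0 < c₃ →
      ∃ b₁ c : ℝ, 1 < b₁ ∧ 0 < c ∧ ∃ n₀ : ℕ,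
        ∀ n : ℕ, n₀ ≤ n → ∀ T : ℕ, 1 ≤ T → (T : ℝ) ≤ (n : ℝ) / b₁ →
          c * Real.sqrt (Real.log ((n : ℝ) / (T : ℝ))) ≤
            (⌊Real.sqrt (c₃⁻¹ *
              Real.log ((n : ℝ) / (12 * c₃ * Real.log (n.choose T))))⌋₊ : ℝ) := by
  intro c₃ hc₃
  exact ⟨Real.exp (96 * c₃), (2 * √(2 * c₃))⁻¹, Real.one_lt_exp_iff.2 (by positivity),
    by positivity, 0, fun n _ T hT hTn => tau_lower_bound_general hc₃
      ((le_div_comm₀ (by positivity) (Real.exp_pos _)).1 hTn)⟩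
end

section
/- Let T be a positive integer and let w ∈ ℝⁿ satisfy ‖w‖₁ ≥ 1 and ‖w‖₀ ≤ T. Then for every real t > 0: F(w,t) ≥ min{ 1/2 , t/(2·√T) }. -/
open Finset
open scoped Classical

/-!
Cauchy–Schwarz on the support bounds the `ℓ¹` norm of the tail of `w` by `√T` times its `ℓ²` norm.
Hence `F(w,t)` is at least the `ℓ¹` norm of the head plus `t/√T` times that of the tail, and so at
least `min(1, t/√T) ‖w‖₁`, however the coordinates are divided into head and tail.
-/

theorem sq_sum_le_card_support_mul_sum_sq {ι R : Type*} [Semiring R] [LinearOrder R]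
    [IsStrictOrderedRing R] [ExistsAddOfLE R] (s : Finset ι) (f : ι → R) :
    (∑ i ∈ s, f i) ^ 2 ≤ #{i ∈ s | f i ≠ 0} * ∑ i ∈ s, f i ^ 2 := by
  have hsum : ∑ i ∈ s with f i ≠ 0, f i = ∑ i ∈ s, f i := sum_filter_ne_zero s
  have hsq : ∑ i ∈ s with f i ≠ 0, f i ^ 2 = ∑ i ∈ s, f i ^ 2 :=
    sum_filter_of_ne fun _ _ h => ne_zero_pow two_ne_zero h
  rw [← hsum, ← hsq]
  exact sq_sum_le_card_mul_sum_sq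

theorem sum_abs_le_sqrt_card_support_mul_sqrt_sum_sq {ι : Type*} (s : Finset ι) (f : ι → ℝ) :
    ∑ i ∈ s, |f i| ≤ √(#{i ∈ s | f i ≠ 0}) * √(∑ i ∈ s, f i ^ 2) := by
  rw [← Real.sqrt_mul (Nat.cast_nonneg _)]
  refine Real.le_sqrt_of_sq_le ?_
  simpa only [abs_ne_zero, sq_abs] using sq_sum_le_card_support_mul_sum_sq s fun i => |f i|

theorem min_one_div_sqrt_mul_sum_abs_le {ι : Type*} [Fintype ι] {f : ι → ℝ} {T : ℕ} {t : ℝ}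
    (hT : 0 < T) (hf : #{i | f i ≠ 0} ≤ T) (ht : 0 ≤ t) (s : Finset ι) :
    min 1 (t / √T) * ∑ i, |f i| ≤ ∑ i ∈ s, |f i| + t * √(∑ i ∈ sᶜ, f i ^ 2) := by
  have hsqrt : 0 < √(T : ℝ) := Real.sqrt_pos.mpr (Nat.cast_pos.mpr hT)
  have hcard : #{i ∈ sᶜ | f i ≠ 0} ≤ T :=
    (card_le_card (filter_subset_filter _ (subset_univ _))).trans hf
  have htail : ∑ i ∈ sᶜ, |f i| ≤ √T * √(∑ i ∈ sᶜ, f i ^ 2) :=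
    (sum_abs_le_sqrt_card_support_mul_sqrt_sum_sq _ f).trans (by gcongr)
  calc min 1 (t / √T) * ∑ i, |f i|
      = min 1 (t / √T) * ∑ i ∈ s, |f i| + min 1 (t / √T) * ∑ i ∈ sᶜ, |f i| := by
        rw [← mul_add, sum_add_sum_compl]
    _ ≤ 1 * ∑ i ∈ s, |f i| + t / √T * (√T * √(∑ i ∈ sᶜ, f i ^ 2)) := by
        gcongr
        exacts [min_le_left _ _, min_le_right _ _]
    _ = ∑ i ∈ s, |f i| + t * √(∑ i ∈ sᶜ, f i ^ 2) := by
        rw [← mul_assoc, div_mul_cancel₀ _ hsqrt.ne', one_mul]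

theorem Fval_lower_bound_general {n T : ℕ} (hT : 0 < T) {w : Fin n → ℝ}
    (hw : #{i | w i ≠ 0} ≤ T) {t : ℝ} (ht : 0 ≤ t) (σ : Equiv.Perm (Fin n)) :
    min 1 (t / √T) * ∑ i, |w i| ≤ Fval w σ t := by
  have hcard : #{j | w (σ j) ≠ 0} = #{i | w i ≠ 0} := by
    simp only [card_filter]
    exact Equiv.sum_comp σ fun i => if w i ≠ 0 then 1 else 0
  have hsum : ∑ j, |w (σ j)| = ∑ i, |w i| := Equiv.sum_comp σ fun i => |w i|
  simpa only [Fval, hsum, compl_filter, not_lt] using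
    min_one_div_sqrt_mul_sum_abs_le hT (hcard.trans_le hw) ht {j : Fin n | (j : ℕ) < ⌊t ^ 2⌋₊}

/-- If `‖w‖₁ ≥ 1` and `‖w‖₀ ≤ T`, then `F(w,t) ≥ min(1/2, t/(2√T))`. -/
theorem Fval_lower_bound (n T : ℕ) (hT : 0 < T) (w : Fin n → ℝ)
    (hw1 : 1 ≤ ∑ i, |w i|) (hw0 : (Finset.univ.filter (fun i => w i ≠ 0)).card ≤ T)
    (t : ℝ) (ht : 0 < t)
    (σ : Equiv.Perm (Fin n)) (hσ : ∀ j k : Fin n, j ≤ k → |w (σ k)| ≤ |w (σ j)|) :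
    min (1 / 2) (t / (2 * Real.sqrt (T : ℝ))) ≤ Fval w σ t := by
  calc min (1 / 2) (t / (2 * √T))
      ≤ min 1 (t / √T) := by
        gcongr <;> linarith [Real.sqrt_nonneg T]
    _ ≤ min 1 (t / √T) * ∑ i, |w i| := le_mul_of_one_le_right (by positivity) hw1
    _ ≤ Fval w σ t := Fval_lower_bound_general hT hw0 ht.le σ
end

section
/- Let n, T, b be positive integers with T ≤ n. The set W of all vectors w ∈ ℝⁿ such that w has at most T nonzero coordinates, every coordinate of w is an integer multiple of 1/(bT), and the sum over all coordinates of |w_i|·bT is at most (b+1)·T, is finite and has cardinality at most binom(n,T) · 2^T · Σ_{i=0}^{(b+1)T} binom(T+i−1, T). -/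
open Finset
open scoped Classical

/-- The net: vectors `w ∈ ℝⁿ` with at most `T` nonzero coordinates, every coordinate an
integer multiple of `1/(bT)`, and `Σ_i |w_i|·bT ≤ (b+1)T`. -/
def netSet (n T b : ℕ) : Set (Fin n → ℝ) :=
  {w | (Finset.univ.filter (fun i => w i ≠ 0)).card ≤ T ∧
       (∀ i, ∃ z : ℤ, w i = (z : ℝ) / ((b : ℝ) * (T : ℝ))) ∧
       (∑ i, |w i| * ((b : ℝ) * (T : ℝ))) ≤ ((b : ℝ) + 1) * (T : ℝ)}

/-!
After scaling by `b T`, a net vector is an integer vector with at most `T` nonzero coordinates and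
`ℓ¹`-norm at most `M = (b + 1) T`. Enlarging its support to a `T`-element set `S` costs a factor
`binom(n, T)`. On `S` the vector is determined by its set of negative coordinates (`2 ^ T` choices)
and its absolute values, of which stars and bars allow `binom(T + M, T)`. As `T < M`, this
is at most `binom(T + M, T + 1)`, which is the claimed sum by the hockey-stick identity.
-/

theorem choose_le_choose_succ_of_two_mul_lt {n k : ℕ} (h : 2 * k < n) :
    n.choose k ≤ n.choose (k + 1) := by
  obtain rfl | h := (Nat.succ_le_of_lt h).eq_or_lt
  · exact (Nat.choose_symm_half k).ge
  · exact Nat.choose_le_succ_of_lt_half_left (by omega)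

theorem sum_range_add_sub_one_choose {k : ℕ} (hk : 0 < k) (m : ℕ) :
    ∑ i ∈ range (m + 1), (k + i - 1).choose k = (m + k).choose (k + 1) := by
  induction m with
  | zero => simp [Nat.choose_eq_zero_of_lt (Nat.sub_one_lt_of_lt hk)]
  | succ m ih =>
    rw [sum_range_succ, ih, show k + (m + 1) - 1 = m + k by omega, Nat.add_right_comm m 1 k,
      Nat.choose_succ_succ, add_comm]

theorem choose_le_sum_range_add_sub_one_choose {k m : ℕ} (hk : 0 < k) (hkm : k < m) :
    (m + k).choose k ≤ ∑ i ∈ range (m + 1), (k + i - 1).choose k :=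
  (choose_le_choose_succ_of_two_mul_lt (by omega)).trans_eq
    (sum_range_add_sub_one_choose hk m).symm

section LatticePoints

variable {ι : Type*}

section Simplex

variable [DecidableEq ι]

/-- The lattice points of the simplex `{f ≥ 0, ∑ i, f i ≤ m}` in the coordinate subspace of `S`,
encoded as finitely supported functions. They are the possible absolute values of the integer
vectors to be counted. -/
noncomputable def natSimplex (S : Finset ι) (m : ℕ) : Finset (ι →₀ ℕ) :=
  (range (m + 1)).biUnion S.finsuppAntidiag

theorem mem_natSimplex {S : Finset ι} {m : ℕ} {f : ι →₀ ℕ} :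
    f ∈ natSimplex S m ↔ f.support ⊆ S ∧ ∑ i ∈ S, f i ≤ m := by
  simp [natSimplex, mem_finsuppAntidiag, and_comm]

theorem card_natSimplex (S : Finset ι) (m : ℕ) : #(natSimplex S m) = (m + #S).choose #S :=
  calc #(natSimplex S m)
    _ = ∑ j ∈ range (m + 1), #(S.finsuppAntidiag j) :=
      card_biUnion fun _ _ _ _ hjl => disjoint_left.2 fun _ hj hl =>
        hjl ((mem_finsuppAntidiag.1 hj).1.symm.trans (mem_finsuppAntidiag.1 hl).1)
    _ = ∑ j ∈ range (m + 1), (#S).multichoose j := by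
      simp only [card_finsuppAntidiag_nat_eq_multichoose]
    _ = (m + #S).choose #S := Nat.sum_range_multichoose m #S

end Simplex

/-- The lattice points of the cross-polytope (`ℓ¹`-ball) of radius `m` in the coordinate subspace
of `S`. -/
def intCrossPolytope (S : Finset ι) (m : ℕ) : Set (ι → ℤ) :=
  {z | (∀ i, z i ≠ 0 → i ∈ S) ∧ ∑ i ∈ S, (z i).natAbs ≤ m}

theorem eq_of_natAbs_eq_of_neg_iff {a c : ℤ} (habs : a.natAbs = c.natAbs)
    (hneg : a < 0 ↔ c < 0) : a = c := by
  omega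

/-- The set of negative coordinates of `z` in `S`, paired with the absolute values of `z` on `S`.
This pair encodes the vectors supported on `S`. -/
noncomputable def signsAndAbs (S : Finset ι) (z : ι → ℤ) : Finset ι × (ι →₀ ℕ) :=
  ({i ∈ S | z i < 0}, Finsupp.indicator S fun i _ => (z i).natAbs)

theorem signsAndAbs_mem_product [DecidableEq ι] {S : Finset ι} {m : ℕ} {z : ι → ℤ}
    (hz : ∑ i ∈ S, (z i).natAbs ≤ m) : signsAndAbs S z ∈ S.powerset ×ˢ natSimplex S m := by
  have hneg : {i ∈ S | z i < 0} ∈ S.powerset := mem_powerset.2 (filter_subset _ S)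
  have hsum : ∑ i ∈ S, Finsupp.indicator S (fun i _ => (z i).natAbs) i = ∑ i ∈ S, (z i).natAbs :=
    sum_congr rfl fun i hi => by simp [hi]
  have habs : (Finsupp.indicator S fun i _ => (z i).natAbs) ∈ natSimplex S m :=
    mem_natSimplex.2 ⟨Finsupp.support_indicator_subset _ _, hsum.trans_le hz⟩
  exact mk_mem_product hneg habs

theorem injOn_signsAndAbs (S : Finset ι) :
    Set.InjOn (signsAndAbs S) {z | ∀ i, z i ≠ 0 → i ∈ S} := by
  intro y hy z hz h
  obtain ⟨hneg, habs⟩ := Prod.ext_iff.1 h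
  funext i
  by_cases hi : i ∈ S
  · refine eq_of_natAbs_eq_of_neg_iff ?_ ?_
    · simpa [signsAndAbs, hi] using DFunLike.congr_fun habs i
    · simpa [signsAndAbs, hi] using Finset.ext_iff.1 hneg i
  · rw [not_imp_comm.1 (hy i) hi, not_imp_comm.1 (hz i) hi]

theorem encard_intCrossPolytope_le (S : Finset ι) (m : ℕ) :
    (intCrossPolytope S m).encard ≤ (2 ^ #S * (m + #S).choose #S : ℕ) :=
  calc (intCrossPolytope S m).encard
    _ ≤ (↑(S.powerset ×ˢ natSimplex S m) : Set (Finset ι × (ι →₀ ℕ))).encard :=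
      Set.encard_le_encard_of_injOn (fun _ hz => mem_coe.2 (signsAndAbs_mem_product hz.2))
        ((injOn_signsAndAbs S).mono fun _ hz => hz.1)
    _ = (2 ^ #S * (m + #S).choose #S : ℕ) := by
      rw [Set.encard_coe_eq_coe_finsetCard, card_product, card_powerset, card_natSimplex]

/-- The integer vectors with at most `k` nonzero coordinates and `ℓ¹`-norm at most `m`. The net is
a scaled copy of such a set. -/
def sparseIntCrossPolytope (ι : Type*) [Fintype ι] (k m : ℕ) : Set (ι → ℤ) :=
  {z | #{i | z i ≠ 0} ≤ k ∧ ∑ i, (z i).natAbs ≤ m}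

variable [Fintype ι]

theorem sparseIntCrossPolytope_subset_biUnion {k : ℕ} (hk : k ≤ Fintype.card ι) (m : ℕ) :
    sparseIntCrossPolytope ι k m ⊆
      ⋃ S ∈ powersetCard k (univ : Finset ι), intCrossPolytope S m := by
  rintro z ⟨hsupp, hsum⟩
  obtain ⟨S, hzS, hS⟩ := exists_superset_card_eq hsupp hk
  simp only [Set.mem_iUnion, mem_powersetCard_univ]
  exact ⟨S, hS, fun i hi => hzS (by simpa using hi),
    (sum_le_univ_sum_of_nonneg fun _ => Nat.zero_le _).trans hsum⟩

theorem encard_sparseIntCrossPolytope_le {k : ℕ} (hk : k ≤ Fintype.card ι) (m : ℕ) :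
    (sparseIntCrossPolytope ι k m).encard ≤
      ((Fintype.card ι).choose k * (2 ^ k * (m + k).choose k) : ℕ) :=
  calc (sparseIntCrossPolytope ι k m).encard
    _ ≤ (⋃ S ∈ powersetCard k (univ : Finset ι), intCrossPolytope S m).encard :=
      Set.encard_mono (sparseIntCrossPolytope_subset_biUnion hk m)
    _ ≤ ∑ S ∈ powersetCard k (univ : Finset ι), (intCrossPolytope S m).encard :=
      set_encard_biUnion_le _ _
    _ ≤ ∑ S ∈ powersetCard k (univ : Finset ι), ((2 ^ k * (m + k).choose k : ℕ) : ℕ∞) :=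
      sum_le_sum fun S hS => by
        simpa only [mem_powersetCard_univ.1 hS] using encard_intCrossPolytope_le S m
    _ = ((Fintype.card ι).choose k * (2 ^ k * (m + k).choose k) : ℕ) := by simp

end LatticePoints

theorem netSet_subset_image_sparseIntCrossPolytope {n T b : ℕ} (hT : 0 < T) (hb : 0 < b) :
    netSet n T b ⊆ (fun (z : Fin n → ℤ) i => (z i : ℝ) / ((b : ℝ) * (T : ℝ))) ''
      sparseIntCrossPolytope (Fin n) T ((b + 1) * T) := by
  rintro w ⟨hsupp, hint, hsum⟩
  have hc : (0 : ℝ) < b * T := by positivity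
  choose z hz using hint
  have hne (i : Fin n) : w i ≠ 0 ↔ z i ≠ 0 := by simp [hz i, hT.ne', hb.ne']
  have habs (i : Fin n) : |w i| * ((b : ℝ) * T) = ((z i).natAbs : ℝ) := by
    rw [hz i, abs_div, abs_of_pos hc, div_mul_cancel₀ _ hc.ne', Nat.cast_natAbs, Int.cast_abs]
  simp only [hne] at hsupp
  simp only [habs] at hsum
  exact ⟨z, ⟨hsupp, mod_cast hsum⟩, funext fun i => (hz i).symm⟩

/-- The net is finite, of cardinality at most
`binom(n,T) · 2^T · Σ_{i=0}^{(b+1)T} binom(T+i-1, T)`. -/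
theorem netSet_card (n T b : ℕ) (hn : 0 < n) (hT : 0 < T) (hb : 0 < b) (hTn : T ≤ n) :
    (netSet n T b).Finite ∧
      (netSet n T b).ncard ≤
        n.choose T * 2 ^ T * ∑ i ∈ Finset.range ((b + 1) * T + 1), (T + i - 1).choose T := by
  rw [← Set.encard_le_coe_iff_finite_ncard_le, mul_assoc]
  calc (netSet n T b).encard
    _ ≤ (sparseIntCrossPolytope (Fin n) T ((b + 1) * T)).encard :=
      (Set.encard_mono (netSet_subset_image_sparseIntCrossPolytope hT hb)).trans
        (Set.encard_image_le _ _)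
    _ ≤ (n.choose T * (2 ^ T * ((b + 1) * T + T).choose T) : ℕ) := by
      simpa only [Fintype.card_fin] using
        encard_sparseIntCrossPolytope_le (hTn.trans_eq (Fintype.card_fin n).symm) ((b + 1) * T)
    _ ≤ _ := by
      gcongr
      exact choose_le_sum_range_add_sub_one_choose hT (lt_mul_of_one_lt_left hT (by omega))
end

section
/- For every constant c₁ > 0 there exists a constant c₂ > 0 such that for all positive integers n, T with T ≤ n and every real v with v > 1/√n: if v ≥ c₁·√(log₂(n/T)/T), then T ≥ c₂·log₂(n·v²)/v². -/
open Finset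

/-!
Factor `n v² = (n / T) · (T v²)`. The lower bound on `v` gives `log_b (n / T) ≤ T v² / c₁²`, and
`log x ≤ x` gives `log_b (T v²) ≤ T v² / log b`; adding the two bounds `log_b (n v²)` by a constant
times `T v²`.
-/

theorem logb_le_self_div_log {b x : ℝ} (hb : 1 < b) (hx : 0 ≤ x) :
    Real.logb b x ≤ x / Real.log b :=
  div_le_div_of_nonneg_right (Real.log_le_self hx) (Real.log_pos hb).le

theorem mul_sqrt_div_le_iff {a c t v : ℝ} (hc : 0 < c) (ht : 0 < t) (hv : 0 ≤ v) :
    c * √(a / t) ≤ v ↔ a ≤ t * v ^ 2 / c ^ 2 := by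
  rw [← le_div_iff₀' hc, Real.sqrt_le_left (div_nonneg hv hc.le), div_le_iff₀' ht, div_pow,
    mul_div_assoc]

theorem rewrite_v_to_T_general {b c₁ n T v : ℝ} (hb : 1 < b) (hc₁ : 0 < c₁) (hn : 0 < n)
    (hT : 0 < T) (hv : 0 < v) (hgap : c₁ * √(Real.logb b (n / T) / T) ≤ v) :
    (1 / c₁ ^ 2 + 1 / Real.log b)⁻¹ * Real.logb b (n * v ^ 2) / v ^ 2 ≤ T := by
  have hlogb : 0 < Real.log b := Real.log_pos hb
  have hTv : 0 < T * v ^ 2 := by positivity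
  rw [div_le_iff₀ (by positivity), inv_mul_le_iff₀ (by positivity)]
  calc Real.logb b (n * v ^ 2)
      = Real.logb b (n / T * (T * v ^ 2)) := by rw [← mul_assoc, div_mul_cancel₀ n hT.ne']
    _ = Real.logb b (n / T) + Real.logb b (T * v ^ 2) :=
        Real.logb_mul (div_pos hn hT).ne' hTv.ne'
    _ ≤ T * v ^ 2 / c₁ ^ 2 + T * v ^ 2 / Real.log b :=
        add_le_add ((mul_sqrt_div_le_iff hc₁ hT hv.le).mp hgap) (logb_le_self_div_log hb hTv.le)
    _ = (1 / c₁ ^ 2 + 1 / Real.log b) * (T * v ^ 2) := by ring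

/-- Rewriting bounds: if `v ≥ c₁ √(log₂(n/T)/T)` and `v > 1/√n`, then
`T ≥ c₂ log₂(n v²)/v²`. -/
theorem rewrite_v_to_T :
    ∀ c₁ : ℝ, 0 < c₁ →
      ∃ c₂ : ℝ, 0 < c₂ ∧
        ∀ n T : ℕ, 0 < n → 0 < T → T ≤ n →
          ∀ v : ℝ, 1 / Real.sqrt (n : ℝ) < v →
            c₁ * Real.sqrt (Real.logb 2 ((n : ℝ) / (T : ℝ)) / (T : ℝ)) ≤ v →
            c₂ * Real.logb 2 ((n : ℝ) * v ^ 2) / v ^ 2 ≤ (T : ℝ) := by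
  intro c₁ hc₁
  refine ⟨(1 / c₁ ^ 2 + 1 / Real.log 2)⁻¹, by positivity, fun n T hn hT _ v hnv hgap ↦ ?_⟩
  have hv : 0 < v := (one_div_nonneg.mpr (Real.sqrt_nonneg n)).trans_lt hnv
  exact rewrite_v_to_T_general one_lt_two hc₁ (Nat.cast_pos.mpr hn) (Nat.cast_pos.mpr hT) hv hgap
end
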